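/- Let γ, δ₀ and the test measures be as in the planar curve setup. Then for every t ∈ [0, δ₀] and σ, ε ∈ (0, δ₀]: (i) for every Borel set A ⊆ ℝ², the 2-dimensional Lebesgue measure of A ∩ φ((t−ε, t+ε) × (−σ, σ)) equals ∫_{t−ε}^{t+ε} ∫_{−σ}^{σ} 1_A(φ(α, β))·(1 − β/R(α)) dβ dα; (ii) in particular the 2-dimensional Lebesgue measure of φ((t−ε, t+ε) × (−σ, σ)) equals exactly 4σε, and the test measure μ_{γ(t)}^{σ,ε} equals the pushforward under φ of the measure on the rectangle (t−ε, t+ε) × (−σ, σ) with density (α, β) ↦ (1/(4σε))·(1 − β/R(α)) with respect to 2-dimensional Lebesgue measure. -/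

import Mathlib

open MeasureTheory Set

/-- Restriction of the ambient volume measure to a set, normalized to a probability measure. -/
noncomputable def normRestrict {X : Type*} [MeasureSpace X] (s : Set X) : Measure X :=
  (volume s)⁻¹ • volume.restrict s

/-!
Differentiating `⟪N, N⟫ = 1` and `⟪T, N⟫ = 0`, where `T` is the unit tangent and `N` the unit
normal, gives `N' = -R⁻¹ T` in the plane. Hence the partial derivatives of the Fermi chart `γ + β N`
are the orthogonal vectors `(1 - β / R) T` and `N`, so that the chart has Jacobian `|1 - β / R|`,
and the absolute value is superfluous as long as `β` stays below the radius of curvature. The change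
of variables formula then gives the disintegration; the term linear in `β` is odd, so it does not
contribute to the total mass.
-/

open Module Topology
open scoped RealInnerProductSpace

section ChangeOfVariables

variable {E F : Type*}
  [NormedAddCommGroup E] [NormedSpace ℝ E] [MeasurableSpace E] [BorelSpace E]
  [NormedAddCommGroup F] [NormedSpace ℝ F] [FiniteDimensional ℝ F] [MeasurableSpace F]
  [BorelSpace F]

theorem map_withDensity_abs_det_comp_fderiv {μ : Measure F} [μ.IsAddHaarMeasure] {ν : Measure E}
    (e : E ≃L[ℝ] F) (he : MeasurePreserving e ν μ) {f : F → E} {f' : F → F →L[ℝ] E} {s : Set F}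
    (hs : NullMeasurableSet s μ) (hf' : ∀ x ∈ s, HasFDerivWithinAt f (f' x) s x)
    (hf : InjOn f s) :
    Measure.map f ((μ.restrict s).withDensity
      fun x => ENNReal.ofReal |((e : E →L[ℝ] F) ∘L f' x).det|) = ν.restrict (f '' s) := by
  set m := (μ.restrict s).withDensity
    fun x => ENNReal.ofReal |((e : E →L[ℝ] F) ∘L f' x).det|
  have hef : Measure.map (e ∘ f) m = μ.restrict (e ∘ f '' s) :=
    map_withDensity_abs_det_fderiv_eq_addHaar μ hs
      (fun x hx => e.hasFDerivAt.comp_hasFDerivWithinAt x (hf' x hx)) (e.injective.comp_injOn hf)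
  have hfm : AEMeasurable f m :=
    (ContinuousOn.aemeasurable₀ (fun x hx => (hf' x hx).continuousWithinAt) hs).mono_ac
      (withDensity_absolutelyContinuous _ _)
  have hcancel : e.symm ∘ e ∘ f = f := funext fun x => e.symm_apply_apply (f x)
  have hsymm : MeasurePreserving e.symm μ ν := he.symm e.toHomeomorph.toMeasurableEquiv
  calc Measure.map f m
      = Measure.map e.symm (Measure.map (e ∘ f) m) := by
        rw [AEMeasurable.map_map_of_aemeasurable e.symm.continuous.aemeasurable
          (e.continuous.measurable.comp_aemeasurable hfm), hcancel]
    _ = Measure.map e.symm (μ.restrict (e.symm ⁻¹' (f '' s))) := by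
        rw [hef, image_comp, e.image_eq_preimage_symm]
    _ = ν.restrict (f '' s) :=
        (hsymm.restrict_preimage_emb
          e.symm.toHomeomorph.measurableEmbedding (f '' s)).map_eq

end ChangeOfVariables

section Plane

variable {E : Type*} [NormedAddCommGroup E] [InnerProductSpace ℝ E]

/-- The coordinates of a vector in an orthonormal basis with two elements, as a point of `ℝ × ℝ`. -/
noncomputable def orthonormalCoords (b : OrthonormalBasis (Fin 2) ℝ E) : E ≃L[ℝ] ℝ × ℝ :=
  b.repr.toContinuousLinearEquiv.trans
    ((EuclideanSpace.equiv (Fin 2) ℝ).trans (ContinuousLinearEquiv.finTwoArrow ℝ ℝ))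

theorem orthonormalCoords_apply (b : OrthonormalBasis (Fin 2) ℝ E) (x : E) :
    orthonormalCoords b x = (b.repr x 0, b.repr x 1) :=
  rfl

theorem measurePreserving_orthonormalCoords [MeasurableSpace E] [BorelSpace E]
    [FiniteDimensional ℝ E] (b : OrthonormalBasis (Fin 2) ℝ E) :
    MeasurePreserving (orthonormalCoords b) :=
  ((volume_preserving_finTwoArrow ℝ).comp (PiLp.volume_preserving_ofLp (Fin 2))).comp
    b.measurePreserving_repr

theorem det_orthonormalCoords_comp (b : OrthonormalBasis (Fin 2) ℝ E) (L : ℝ × ℝ →L[ℝ] E) :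
    ((orthonormalCoords b : E →L[ℝ] ℝ × ℝ) ∘L L).det = b.toBasis.det ![L (1, 0), L (0, 1)] := by
  rw [ContinuousLinearMap.det, ← LinearMap.det_toMatrix (Basis.finTwoProd ℝ), Basis.det_apply,
    Matrix.det_fin_two, Matrix.det_fin_two]
  simp [LinearMap.toMatrix_apply, Basis.toMatrix_apply, orthonormalCoords_apply]

variable [Fact (finrank ℝ E = 2)]

attribute [local instance] FiniteDimensional.of_fact_finrank_eq_two

theorem map_withDensity_abs_areaForm_fderiv [MeasurableSpace E] [BorelSpace E]
    (o : Orientation ℝ E (Fin 2)) {f : ℝ × ℝ → E} {f' : ℝ × ℝ → ℝ × ℝ →L[ℝ] E} {s : Set (ℝ × ℝ)}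
    (hs : NullMeasurableSet s) (hf' : ∀ p ∈ s, HasFDerivWithinAt f (f' p) s p)
    (hf : InjOn f s) :
    Measure.map f ((volume.restrict s).withDensity
      fun p => ENNReal.ofReal |o.areaForm (f' p (1, 0)) (f' p (0, 1))|) =
        volume.restrict (f '' s) := by
  let b := o.finOrthonormalBasis two_pos Fact.out
  simp only [o.areaForm_to_volumeForm, o.volumeForm_robust' b, ← det_orthonormalCoords_comp]
  exact map_withDensity_abs_det_comp_fderiv _ (measurePreserving_orthonormalCoords b) hs hf' hf

end Plane

section UnitNormal

variable {E : Type*} [NormedAddCommGroup E] [InnerProductSpace ℝ E] {γ : ℝ → E} {α : ℝ}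

theorem inner_deriv_eq_zero_of_eventually_norm_eq {f : ℝ → E} {c : ℝ}
    (hf : ∀ᶠ a in 𝓝 α, ‖f a‖ = c) : ⟪f α, deriv f α⟫ = 0 := by
  by_cases hd : DifferentiableAt ℝ f α
  · have hconst : (‖f ·‖ ^ 2) =ᶠ[𝓝 α] fun _ => c ^ 2 := hf.mono fun a ha => by simp [ha]
    have := hd.hasDerivAt.norm_sq.unique ((hasDerivAt_const α _).congr_of_eventuallyEq hconst)
    linarith
  · rw [deriv_zero_of_not_differentiableAt hd, inner_zero_right]

/-- The radius of the osculating circle of a unit-speed curve, the reciprocal of its curvature.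
It takes the junk value `0` where the curvature vanishes. -/
noncomputable def osculatingRadius (γ : ℝ → E) (α : ℝ) : ℝ :=
  ‖deriv (deriv γ) α‖⁻¹

/-- The principal unit normal of a unit-speed curve, defined to be `0` where the curvature
vanishes. -/
noncomputable def unitNormal (γ : ℝ → E) (α : ℝ) : E :=
  osculatingRadius γ α • deriv (deriv γ) α

theorem norm_unitNormal (hcurv : deriv (deriv γ) α ≠ 0) : ‖unitNormal γ α‖ = 1 := by
  rw [unitNormal, osculatingRadius, norm_smul, norm_inv, norm_norm,
    inv_mul_cancel₀ (norm_ne_zero_iff.2 hcurv)]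

theorem inner_deriv_unitNormal (hunit : ∀ᶠ a in 𝓝 α, ‖deriv γ a‖ = 1) :
    ⟪deriv γ α, unitNormal γ α⟫ = 0 := by
  rw [unitNormal, real_inner_smul_right, inner_deriv_eq_zero_of_eventually_norm_eq hunit, mul_zero]

theorem differentiableAt_unitNormal (hdiff : DifferentiableAt ℝ (deriv (deriv γ)) α)
    (hcurv : deriv (deriv γ) α ≠ 0) : DifferentiableAt ℝ (unitNormal γ) α :=
  ((hdiff.norm ℝ hcurv).inv (norm_ne_zero_iff.2 hcurv)).smul hdiff

theorem inner_deriv_deriv_unitNormal (hunit : ∀ᶠ a in 𝓝 α, ‖deriv γ a‖ = 1)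
    (hdiff : DifferentiableAt ℝ (deriv (deriv γ)) α) (hcurv : deriv (deriv γ) α ≠ 0) :
    ⟪deriv γ α, deriv (unitNormal γ) α⟫ = -(osculatingRadius γ α)⁻¹ := by
  have hconst : (fun a => ⟪deriv γ a, unitNormal γ a⟫) =ᶠ[𝓝 α] fun _ => 0 :=
    hunit.eventually_nhds.mono fun _ => inner_deriv_unitNormal
  have hproduct := (differentiableAt_of_deriv_ne_zero hcurv).hasDerivAt.inner ℝ
    (differentiableAt_unitNormal hdiff hcurv).hasDerivAt
  have hsum := hproduct.unique ((hasDerivAt_const α _).congr_of_eventuallyEq hconst)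
  have hcurvature : ⟪deriv (deriv γ) α, unitNormal γ α⟫ = (osculatingRadius γ α)⁻¹ := by
    rw [unitNormal, osculatingRadius, inv_inv, real_inner_smul_right,
      real_inner_self_eq_norm_mul_norm, inv_mul_cancel_left₀ (norm_ne_zero_iff.2 hcurv)]
  rw [← hcurvature]
  exact eq_neg_of_add_eq_zero_left hsum

theorem hasDerivAt_unitNormal [Fact (finrank ℝ E = 2)] (hunit : ∀ᶠ a in 𝓝 α, ‖deriv γ a‖ = 1)
    (hdiff : DifferentiableAt ℝ (deriv (deriv γ)) α) (hcurv : deriv (deriv γ) α ≠ 0) :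
    HasDerivAt (unitNormal γ) (-(osculatingRadius γ α)⁻¹ • deriv γ α) α := by
  have hT : ‖deriv γ α‖ = 1 := hunit.self_of_nhds
  have hN : ∀ᶠ a in 𝓝 α, ‖unitNormal γ a‖ = 1 :=
    (hdiff.continuousAt.eventually_ne hcurv).mono fun _ => norm_unitNormal
  obtain ⟨c, hc⟩ := Submodule.mem_span_singleton.1 <|
    Submodule.mem_span_singleton_of_inner_eq_zero_of_inner_eq_zero
      (norm_ne_zero_iff.1 (hN.self_of_nhds ▸ one_ne_zero)) (norm_ne_zero_iff.1 (hT ▸ one_ne_zero))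
      (inner_deriv_eq_zero_of_eventually_norm_eq hN)
      ((real_inner_comm _ _).trans (inner_deriv_unitNormal hunit))
  have hcR : c = -(osculatingRadius γ α)⁻¹ := by
    rw [← inner_deriv_deriv_unitNormal hunit hdiff hcurv, ← hc, real_inner_smul_right,
      real_inner_self_eq_norm_sq, hT, one_pow, mul_one]
  rw [← hcR, hc]
  exact (differentiableAt_unitNormal hdiff hcurv).hasDerivAt

end UnitNormal

section FermiChart

variable {E : Type*} [NormedAddCommGroup E] [InnerProductSpace ℝ E] {γ : ℝ → E}

/-- The Fermi chart of a curve: `(α, β)` is sent to the point at signed distance `β` from `γ α`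
along the unit normal. -/
noncomputable def fermiChart (γ : ℝ → E) (p : ℝ × ℝ) : E :=
  γ p.1 + p.2 • unitNormal γ p.1

theorem hasFDerivAt_fermiChart [Fact (finrank ℝ E = 2)] {p : ℝ × ℝ}
    (hunit : ∀ᶠ a in 𝓝 p.1, ‖deriv γ a‖ = 1)
    (hdiff : DifferentiableAt ℝ (deriv (deriv γ)) p.1) (hcurv : deriv (deriv γ) p.1 ≠ 0) :
    HasFDerivAt (fermiChart γ)
      ((ContinuousLinearMap.toSpanSingleton ℝ
          ((1 - p.2 / osculatingRadius γ p.1) • deriv γ p.1)).coprod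
        (ContinuousLinearMap.toSpanSingleton ℝ (unitNormal γ p.1))) p := by
  have hγ : HasDerivAt γ (deriv γ p.1) p.1 :=
    (differentiableAt_of_deriv_ne_zero <|
      norm_ne_zero_iff.1 (hunit.self_of_nhds ▸ one_ne_zero)).hasDerivAt
  have hN := hasDerivAt_unitNormal hunit hdiff hcurv
  refine ((hγ.hasFDerivAt.comp p hasFDerivAt_fst).add
    (hasFDerivAt_snd.smul (hN.hasFDerivAt.comp p hasFDerivAt_fst))).congr_fderiv ?_
  ext
  · suffices deriv γ p.1 + -((p.2 * (osculatingRadius γ p.1)⁻¹) • deriv γ p.1) =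
        (1 - p.2 / osculatingRadius γ p.1) • deriv γ p.1 by simpa [smul_smul]
    module
  · simp

variable [MeasurableSpace E] [BorelSpace E]

theorem measurable_osculatingRadius [CompleteSpace E] (γ : ℝ → E) :
    Measurable (osculatingRadius γ) :=
  (measurable_deriv (deriv γ)).norm.inv

theorem measurable_one_sub_div_osculatingRadius [CompleteSpace E] (γ : ℝ → E) :
    Measurable fun p : ℝ × ℝ => 1 - p.2 / osculatingRadius γ p.1 :=
  measurable_const.sub (measurable_snd.div ((measurable_osculatingRadius γ).comp measurable_fst))

variable [Fact (finrank ℝ E = 2)]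

attribute [local instance] FiniteDimensional.of_fact_finrank_eq_two

theorem measurable_unitNormal (γ : ℝ → E) : Measurable (unitNormal γ) :=
  (measurable_osculatingRadius γ).smul (measurable_deriv (deriv γ))

theorem measurable_fermiChart (hγ : Measurable γ) : Measurable (fermiChart γ) :=
  (hγ.comp measurable_fst).add
    (measurable_snd.smul ((measurable_unitNormal γ).comp measurable_fst))

theorem map_fermiChart_withDensity_abs {s : Set (ℝ × ℝ)} (hs : NullMeasurableSet s)
    (hunit : ∀ p ∈ s, ∀ᶠ a in 𝓝 p.1, ‖deriv γ a‖ = 1)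
    (hdiff : ∀ p ∈ s, DifferentiableAt ℝ (deriv (deriv γ)) p.1)
    (hcurv : ∀ p ∈ s, deriv (deriv γ) p.1 ≠ 0) (hinj : InjOn (fermiChart γ) s) :
    Measure.map (fermiChart γ) ((volume.restrict s).withDensity
      fun p => ENNReal.ofReal |1 - p.2 / osculatingRadius γ p.1|) =
        volume.restrict (fermiChart γ '' s) := by
  let o : Orientation ℝ E (Fin 2) :=
    ((stdOrthonormalBasis ℝ E).reindex (finCongr Fact.out)).toBasis.orientation
  rw [← map_withDensity_abs_areaForm_fderiv o hs (fun p hp => (hasFDerivAt_fermiChart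
    (hunit p hp) (hdiff p hp) (hcurv p hp)).hasFDerivWithinAt) hinj]
  congr 1
  refine withDensity_congr_ae ?_
  filter_upwards [ae_restrict_mem₀ hs] with p hp
  have harea : |o.areaForm (deriv γ p.1) (unitNormal γ p.1)| = 1 := by
    rw [o.abs_areaForm_of_orthogonal (inner_deriv_unitNormal (hunit p hp)),
      (hunit p hp).self_of_nhds, norm_unitNormal (hcurv p hp), one_mul]
  simp [abs_mul, harea]

end FermiChart

theorem setIntegral_Ioo_one_sub_div {r : ℝ} (hr : 0 ≤ r) (R : ℝ) :
    ∫ β in Ioo (-r) r, (1 - β / R) = 2 * r := by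
  rw [← integral_Ioc_eq_integral_Ioo, ← intervalIntegral.integral_of_le (by linarith),
    intervalIntegral.integral_sub (by simp) (by simp)]
  simp
  ring

section FermiTube

variable {E : Type*} [NormedAddCommGroup E] [InnerProductSpace ℝ E]

attribute [local instance] FiniteDimensional.of_fact_finrank_eq_two

/-- The setting in which `fermiChart γ` parametrizes the open tube of half-width `r` around the
part of the unit-speed curve `γ` over `I`: the chart is injective there, and the half-width does
not exceed the radius of any osculating circle. -/
structure IsFermiTube (γ : ℝ → E) (I : Set ℝ) (r : ℝ) : Prop where
  norm_deriv : ∀ α, ‖deriv γ α‖ = 1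
  differentiableAt : ∀ α ∈ I, DifferentiableAt ℝ (deriv (deriv γ)) α
  injOn : InjOn (fermiChart γ) (I ×ˢ Ioo (-r) r)
  le_osculatingRadius : ∀ α ∈ I, r ≤ osculatingRadius γ α

namespace IsFermiTube

variable {γ : ℝ → E} {I J : Set ℝ} {r σ : ℝ}

theorem mono (h : IsFermiTube γ I r) (hJ : J ⊆ I) (hσ : σ ≤ r) : IsFermiTube γ J σ where
  norm_deriv := h.norm_deriv
  differentiableAt α hα := h.differentiableAt α (hJ hα)
  injOn := h.injOn.mono (prod_mono hJ (Ioo_subset_Ioo (neg_le_neg hσ) hσ))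
  le_osculatingRadius α hα := hσ.trans (h.le_osculatingRadius α (hJ hα))

theorem differentiable (h : IsFermiTube γ I r) : Differentiable ℝ γ := fun α =>
  differentiableAt_of_deriv_ne_zero (norm_ne_zero_iff.1 (h.norm_deriv α ▸ one_ne_zero))

theorem osculatingRadius_pos (h : IsFermiTube γ I r) {p : ℝ × ℝ} (hp : p ∈ I ×ˢ Ioo (-r) r) :
    0 < osculatingRadius γ p.1 :=
  (neg_lt_self_iff.1 (hp.2.1.trans hp.2.2)).trans_le (h.le_osculatingRadius _ hp.1)

theorem deriv_deriv_ne_zero (h : IsFermiTube γ I r) {p : ℝ × ℝ} (hp : p ∈ I ×ˢ Ioo (-r) r) :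
    deriv (deriv γ) p.1 ≠ 0 :=
  norm_pos_iff.1 (inv_pos.1 (h.osculatingRadius_pos hp))

theorem abs_div_osculatingRadius_le_one (h : IsFermiTube γ I r) {p : ℝ × ℝ}
    (hp : p ∈ I ×ˢ Ioo (-r) r) : |p.2 / osculatingRadius γ p.1| ≤ 1 := by
  have hR := h.osculatingRadius_pos hp
  rw [abs_div, abs_of_pos hR]
  exact div_le_one_of_le₀ ((abs_lt.2 hp.2).le.trans (h.le_osculatingRadius _ hp.1)) hR.le

theorem one_sub_div_osculatingRadius_nonneg (h : IsFermiTube γ I r) {p : ℝ × ℝ}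
    (hp : p ∈ I ×ˢ Ioo (-r) r) : 0 ≤ 1 - p.2 / osculatingRadius γ p.1 :=
  sub_nonneg.2 (abs_le.1 (h.abs_div_osculatingRadius_le_one hp)).2

variable [MeasurableSpace E] [BorelSpace E] [Fact (finrank ℝ E = 2)]

theorem measurable_fermiChart (h : IsFermiTube γ I r) : Measurable (fermiChart γ) :=
  _root_.measurable_fermiChart h.differentiable.continuous.measurable

theorem map_fermiChart_withDensity (h : IsFermiTube γ I r) (hI : MeasurableSet I) :
    Measure.map (fermiChart γ) ((volume.restrict (I ×ˢ Ioo (-r) r)).withDensity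
      fun p => ENNReal.ofReal (1 - p.2 / osculatingRadius γ p.1)) =
        volume.restrict (fermiChart γ '' (I ×ˢ Ioo (-r) r)) := by
  have hs : MeasurableSet (I ×ˢ Ioo (-r) r) := hI.prod measurableSet_Ioo
  rw [← map_fermiChart_withDensity_abs hs.nullMeasurableSet
    (fun p _ => .of_forall h.norm_deriv) (fun p hp => h.differentiableAt p.1 hp.1)
    (fun p hp => h.deriv_deriv_ne_zero hp) h.injOn]
  congr 1
  refine withDensity_congr_ae ?_
  filter_upwards [ae_restrict_mem hs] with p hp
  rw [abs_of_nonneg (h.one_sub_div_osculatingRadius_nonneg hp)]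

theorem integrableOn_one_sub_div_osculatingRadius (h : IsFermiTube γ I r) (hI : MeasurableSet I)
    (hvI : volume I ≠ ⊤) :
    IntegrableOn (fun p => 1 - p.2 / osculatingRadius γ p.1) (I ×ˢ Ioo (-r) r) := by
  have hvs : volume (I ×ˢ Ioo (-r) r) ≠ ⊤ := by
    rw [Measure.volume_eq_prod, Measure.prod_prod]
    exact ENNReal.mul_ne_top hvI measure_Ioo_lt_top.ne
  refine Measure.integrableOn_of_bounded (M := 1 + 1) hvs
    (measurable_one_sub_div_osculatingRadius γ).aestronglyMeasurable ?_
  filter_upwards [ae_restrict_mem (hI.prod measurableSet_Ioo)] with p hp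
  exact (norm_sub_le _ _).trans (add_le_add norm_one.le (h.abs_div_osculatingRadius_le_one hp))

theorem volume_inter_image_fermiChart_eq_setIntegral (h : IsFermiTube γ I r)
    (hI : MeasurableSet I) (hvI : volume I ≠ ⊤) {A : Set E} (hA : MeasurableSet A) :
    volume (A ∩ fermiChart γ '' (I ×ˢ Ioo (-r) r)) =
      ENNReal.ofReal (∫ p in fermiChart γ ⁻¹' A,
        (1 - p.2 / osculatingRadius γ p.1) ∂volume.restrict (I ×ˢ Ioo (-r) r)) := by
  have hnonneg : ∀ᵐ p ∂volume.restrict (I ×ˢ Ioo (-r) r),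
      0 ≤ 1 - p.2 / osculatingRadius γ p.1 := by
    filter_upwards [ae_restrict_mem (hI.prod measurableSet_Ioo)] with p hp
    exact h.one_sub_div_osculatingRadius_nonneg hp
  rw [← Measure.restrict_apply hA, ← h.map_fermiChart_withDensity hI,
    Measure.map_apply h.measurable_fermiChart hA,
    withDensity_apply _ (h.measurable_fermiChart hA),
    ofReal_integral_eq_lintegral_ofReal
      (h.integrableOn_one_sub_div_osculatingRadius hI hvI).integrable.restrict
      (ae_restrict_of_ae hnonneg)]

theorem volume_inter_image_fermiChart (h : IsFermiTube γ I r) (hI : MeasurableSet I)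
    (hvI : volume I ≠ ⊤) {A : Set E} (hA : MeasurableSet A) :
    volume (A ∩ fermiChart γ '' (I ×ˢ Ioo (-r) r)) =
      ENNReal.ofReal (∫ α in I, ∫ β in Ioo (-r) r,
        A.indicator (fun _ => (1 : ℝ)) (fermiChart γ (α, β)) *
          (1 - β / osculatingRadius γ α)) := by
  have hpre : MeasurableSet (fermiChart γ ⁻¹' A) := h.measurable_fermiChart hA
  have hint := (h.integrableOn_one_sub_div_osculatingRadius hI hvI).integrable.indicator hpre
  rw [h.volume_inter_image_fermiChart_eq_setIntegral hI hvI hA, ← integral_indicator hpre,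
    Measure.volume_eq_prod, setIntegral_prod _ hint]
  classical
  simp only [indicator_apply, mem_preimage, ite_mul, one_mul, zero_mul]

theorem volume_image_fermiChart (h : IsFermiTube γ I r) (hI : MeasurableSet I)
    (hvI : volume I ≠ ⊤) (hr : 0 ≤ r) :
    volume (fermiChart γ '' (I ×ˢ Ioo (-r) r)) = ENNReal.ofReal (2 * r * volume.real I) := by
  rw [← univ_inter (fermiChart γ '' _), h.volume_inter_image_fermiChart hI hvI .univ]
  simp only [indicator_univ, one_mul, setIntegral_Ioo_one_sub_div hr, setIntegral_const,
    smul_eq_mul, mul_comm]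

theorem normRestrict_image_fermiChart (h : IsFermiTube γ I r) (hI : MeasurableSet I)
    (hvI₀ : volume I ≠ 0) (hvI : volume I ≠ ⊤) (hr : 0 < r) :
    normRestrict (fermiChart γ '' (I ×ˢ Ioo (-r) r)) =
      Measure.map (fermiChart γ) ((volume.restrict (I ×ˢ Ioo (-r) r)).withDensity
        fun p => ENNReal.ofReal
          (1 / (2 * r * volume.real I) * (1 - p.2 / osculatingRadius γ p.1))) := by
  have hpos : 0 < 2 * r * volume.real I :=
    mul_pos (mul_pos two_pos hr) (ENNReal.toReal_pos hvI₀ hvI)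
  simp only [one_div, ENNReal.ofReal_mul (inv_nonneg.2 hpos.le), ENNReal.ofReal_inv_of_pos hpos]
  rw [normRestrict, h.volume_image_fermiChart hI hvI hr.le, ← h.map_fermiChart_withDensity hI,
    ← Measure.map_smul,
    ← withDensity_smul _ (measurable_one_sub_div_osculatingRadius γ).ennreal_ofReal]
  rfl

end IsFermiTube

theorem planar_curve_test_measure_in_fermi_coordinates_general
    [MeasurableSpace E] [BorelSpace E] [Fact (finrank ℝ E = 2)]
    {γ : ℝ → E} {I : Set ℝ} {r t σ ε : ℝ} (h : IsFermiTube γ I r)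
    (hI : Ioo (t - ε) (t + ε) ⊆ I) (hσ : σ ∈ Ioc 0 r) (hε : 0 < ε) :
    (∀ A : Set E, MeasurableSet A →
      volume (A ∩ fermiChart γ '' (Ioo (t - ε) (t + ε) ×ˢ Ioo (-σ) σ)) =
        ENNReal.ofReal (∫ α in Ioo (t - ε) (t + ε), ∫ β in Ioo (-σ) σ,
          A.indicator (fun _ => (1 : ℝ)) (fermiChart γ (α, β)) *
            (1 - β / osculatingRadius γ α))) ∧
    volume (fermiChart γ '' (Ioo (t - ε) (t + ε) ×ˢ Ioo (-σ) σ)) =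
      ENNReal.ofReal (4 * σ * ε) ∧
    normRestrict (fermiChart γ '' (Ioo (t - ε) (t + ε) ×ˢ Ioo (-σ) σ)) =
      Measure.map (fermiChart γ)
        ((volume.restrict (Ioo (t - ε) (t + ε) ×ˢ Ioo (-σ) σ)).withDensity
          fun p => ENNReal.ofReal (1 / (4 * σ * ε) * (1 - p.2 / osculatingRadius γ p.1))) := by
  have tube := h.mono hI hσ.2
  have hfinite : volume (Ioo (t - ε) (t + ε)) ≠ ⊤ := measure_Ioo_lt_top.ne
  have hne : volume (Ioo (t - ε) (t + ε)) ≠ 0 := by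
    rw [Ne, Real.volume_Ioo, ENNReal.ofReal_eq_zero]
    linarith
  have harea : 4 * σ * ε = 2 * σ * volume.real (Ioo (t - ε) (t + ε)) := by
    rw [Real.volume_real_Ioo_of_le (by linarith)]
    ring
  rw [harea]
  exact ⟨fun A hA => tube.volume_inter_image_fermiChart measurableSet_Ioo hfinite hA,
    tube.volume_image_fermiChart measurableSet_Ioo hfinite hσ.1.le,
    tube.normRestrict_image_fermiChart measurableSet_Ioo hne hfinite hσ.1⟩

end FermiTube

/-- Test measures of a planar curve in Fermi coordinates: (i) disintegration of the planar
Lebesgue measure over the Fermi chart with density `1 − β/R(α)`; (ii) the Fermi image of the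
rectangle has Lebesgue measure exactly `4σε` and the test measure is the pushforward of the
normalized density `(1/(4σε))(1 − β/R(α))` on the rectangle. -/
theorem planar_curve_test_measure_in_fermi_coordinates
    (δ₀ : ℝ) (hδ₀ : 0 < δ₀)
    (γ : ℝ → EuclideanSpace ℝ (Fin 2)) (hγ : ContDiff ℝ (⊤ : ℕ∞) γ)
    (hunit : ∀ α : ℝ, ‖deriv γ α‖ = 1)
    (hcurv : ∀ α ∈ Icc (-δ₀) (2 * δ₀), deriv (deriv γ) α ≠ 0)
    (R : ℝ → ℝ) (hR : ∀ α : ℝ, R α = ‖deriv (deriv γ) α‖⁻¹)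
    (n : ℝ → EuclideanSpace ℝ (Fin 2)) (hn : ∀ α : ℝ, n α = R α • deriv (deriv γ) α)
    (φ : ℝ × ℝ → EuclideanSpace ℝ (Fin 2)) (hφ : ∀ p : ℝ × ℝ, φ p = γ p.1 + p.2 • n p.1)
    (hinj : InjOn φ (Icc (-δ₀) (2 * δ₀) ×ˢ Icc (-δ₀) δ₀))
    (hreach : ∀ α ∈ Icc (-δ₀) (2 * δ₀), δ₀ < R α)
    (μ : ℝ → ℝ → ℝ → Measure (EuclideanSpace ℝ (Fin 2)))
    (hμ : ∀ t σ ε : ℝ, μ t σ ε = normRestrict (φ '' (Ioo (t - ε) (t + ε) ×ˢ Ioo (-σ) σ))) :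
    ∀ t ∈ Icc (0:ℝ) δ₀, ∀ σ ∈ Ioc (0:ℝ) δ₀, ∀ ε ∈ Ioc (0:ℝ) δ₀,
      (∀ A : Set (EuclideanSpace ℝ (Fin 2)), MeasurableSet A →
        volume (A ∩ φ '' (Ioo (t - ε) (t + ε) ×ˢ Ioo (-σ) σ)) =
          ENNReal.ofReal (∫ α in Ioo (t - ε) (t + ε), ∫ β in Ioo (-σ) σ,
            A.indicator (fun _ => (1:ℝ)) (φ (α, β)) * (1 - β / R α))) ∧
      volume (φ '' (Ioo (t - ε) (t + ε) ×ˢ Ioo (-σ) σ)) = ENNReal.ofReal (4 * σ * ε) ∧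
      μ t σ ε = Measure.map φ
        ((volume.restrict (Ioo (t - ε) (t + ε) ×ˢ Ioo (-σ) σ)).withDensity
          fun p : ℝ × ℝ => ENNReal.ofReal (1 / (4 * σ * ε) * (1 - p.2 / R p.1))) := by
  have : Fact (finrank ℝ (EuclideanSpace ℝ (Fin 2)) = 2) := ⟨finrank_euclideanSpace_fin⟩
  obtain rfl : R = osculatingRadius γ := funext hR
  obtain rfl : n = unitNormal γ := funext hn
  obtain rfl : φ = fermiChart γ := funext hφ
  have tube : IsFermiTube γ (Icc (-δ₀) (2 * δ₀)) δ₀ :=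
    { norm_deriv := hunit
      differentiableAt := fun α _ => (hγ.iterate_deriv 2).differentiable (by simp) α
      injOn := hinj.mono (prod_mono_right Ioo_subset_Icc_self)
      le_osculatingRadius := fun α hα => (hreach α hα).le }
  intro t ht σ hσ ε hε
  have hI : Ioo (t - ε) (t + ε) ⊆ Icc (-δ₀) (2 * δ₀) :=
    Ioo_subset_Icc_self.trans
      (Icc_subset_Icc (by linarith [ht.1, hε.2]) (by linarith [ht.2, hε.2]))
  rw [hμ]
  exact planar_curve_test_measure_in_fermi_coordinates_general tube hI hσ hε.1
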